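/- Continuum of solutions with arbitrarily large norm on finite graphs: Let G = (V(G),E(G)) be a weighted graph and Ω ⊂ V(G) a finite m^G-connected subset with nonempty m^G-boundary. Let f ∈ C¹([0,∞)) be strictly convex, increasing, with f(0) > 0 and lim_{s→∞} f(s)/s = +∞ (so f satisfies hypotheses (H)), let λ* be the extremal parameter of (P(λf)), and let g₂⁻¹ be the decreasing branch inverse of g(s) = s/f(s) as in the context. Set S* := {(λ,u) ∈ [0,λ*] × L^∞(Ω_m,ν_G) : u is a solution of (P(λf))}. Then for every 0 < ε < λ* there exists 0 < λ < ε such that (P(λf)) has a solution u^λ with ‖u^λ‖_∞ = g₂⁻¹(ε); moreover, the connected component of S* containing (0,0) also contains (λ, u^λ). In particular, there is a continuum branch of solutions u^λ with ‖u^λ‖_∞ → +∞ as λ → 0⁺. -/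

import Mathlib

open Set

/-- The weighted degree `d_x = Σ_y w_{xy}` of a vertex in a weighted graph. -/
noncomputable def degG {V : Type*} (w : V → V → ℝ) (x : V) : ℝ := ∑' y, w x y

/-- The (normalized) graph Laplacian `Δ u(x) = (1/d_x) Σ_y w_{xy}(u(y) − u(x))`. -/
noncomputable def lapG {V : Type*} (w : V → V → ℝ) (u : V → ℝ) (x : V) : ℝ :=
  (∑' y, w x y * (u y - u x)) / degG w x

/-- The `m^G`-boundary of `Ω` in a weighted graph. -/
def bdryG {V : Type*} (w : V → V → ℝ) (Ω : Set V) : Set V :=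
  {x | x ∉ Ω ∧ ∃ y ∈ Ω, 0 < w x y}

/-- The `m^G`-closure of `Ω` in a weighted graph. -/
def closG {V : Type*} (w : V → V → ℝ) (Ω : Set V) : Set V := Ω ∪ bdryG w Ω

/-- `Ω` is `m^G`-connected. -/
def connG {V : Type*} (w : V → V → ℝ) (Ω : Set V) : Prop :=
  ∀ A B : Set V, A.Nonempty → B.Nonempty → A ⊆ Ω → B ⊆ Ω → A ∪ B = Ω →
    ∃ x ∈ A, ∃ y ∈ B, 0 < w x y

/-- A (nonnegative) solution of the Gelfand problem `(P(λ f))` on a weighted graph: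
`u = 0` outside `Ω` (in particular on the Dirichlet boundary `∂_{m^G}Ω`), `u ≥ 0`, and
`−Δ_{m^G} u = λ f(u)` on `Ω`. -/
def IsSolG {V : Type*} (w : V → V → ℝ) (Ω : Set V) (lam : ℝ) (f : ℝ → ℝ)
    (u : V → ℝ) : Prop :=
  (∀ x ∉ Ω, u x = 0) ∧ (∀ x, 0 ≤ u x) ∧ ∀ x ∈ Ω, -(lapG w u x) = lam * f (u x)

/-- The extremal parameter `λ*` on a weighted graph. -/
noncomputable def lamStarG {V : Type*} (w : V → V → ℝ) (Ω : Set V) (f : ℝ → ℝ) : ℝ :=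
  sSup {lam : ℝ | 0 ≤ lam ∧ ∃ u : V → ℝ, IsSolG w Ω lam f u}


section Brouwer
open MeasureTheory Polynomial

variable {ι : Type*} [Fintype ι]

lemma brw_small (h : (ι → ℝ) → (ι → ℝ)) (hh : ContDiff ℝ 1 h) (R : ℝ)
    (hs : ∀ x, x ∉ Metric.closedBall (0 : ι → ℝ) R → h x = 0) :
    ∃ η : ℝ, 0 < η ∧ ∀ t : ℝ, 0 < t → t < η → ∀ φ : (ι → ℝ) → ℝ,
      ∫ x in Metric.closedBall (0 : ι → ℝ) R,
        (ContinuousLinearMap.id ℝ (ι → ℝ) + t • fderiv ℝ h x).det * φ (x + t • h x)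
      = ∫ x in Metric.closedBall (0 : ι → ℝ) R, φ x := by
  have hcs : HasCompactSupport h := HasCompactSupport.intro (isCompact_closedBall 0 R) hs
  obtain ⟨K, hK⟩ := hh.lipschitzWith_of_hasCompactSupport hcs (by norm_num)
  obtain ⟨D, hD⟩ := (hcs.fderiv ℝ).exists_bound_of_continuous (hh.continuous_fderiv (by norm_num))
  have hdet : ∀ᶠ A in nhds (ContinuousLinearMap.id ℝ (ι → ℝ)), 0 < A.det := by
    have hc : Continuous fun f : (ι → ℝ) →L[ℝ] (ι → ℝ) => f.det :=
      ContinuousLinearMap.continuous_det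
    have h1 : (0:ℝ) < (ContinuousLinearMap.id ℝ (ι → ℝ)).det := by
      simp [ContinuousLinearMap.det]
    exact hc.continuousAt.eventually (lt_mem_nhds h1)
  obtain ⟨r, hr, hrb⟩ := Metric.eventually_nhds_iff.1 hdet
  have hD0 : 0 ≤ D := (norm_nonneg _).trans (hD 0)
  refine ⟨min (r / (D + 1)) (1 / (K + 1)), by positivity, fun t ht0 ht φ => ?_⟩
  have ht1 : t * (D + 1) < r := by
    rw [← lt_div_iff₀ (by positivity)]; exact ht.trans_le (min_le_left _ _)
  have ht2 : t * (K + 1) < 1 := by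
    rw [← lt_div_iff₀ (by positivity)]; exact ht.trans_le (min_le_right _ _)
  have hpos : ∀ x, 0 < (ContinuousLinearMap.id ℝ (ι → ℝ) + t • fderiv ℝ h x).det := by
    intro x
    apply hrb
    rw [dist_eq_norm, add_sub_cancel_left, norm_smul, Real.norm_of_nonneg ht0.le]
    nlinarith [hD x, norm_nonneg (fderiv ℝ h x)]
  have hinj : Function.Injective (fun x => x + t • h x) := by
    intro x y hxy
    have hxy' : x + t • h x = y + t • h y := hxy
    have e : x - y = t • (h y - h x) := by
      rw [smul_sub]; linear_combination hxy'
    have := hK.dist_le_mul y x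
    rw [dist_eq_norm, dist_eq_norm] at this
    have e2 : ‖x - y‖ = t * ‖h y - h x‖ := by
      conv_lhs => rw [e]
      rw [norm_smul, Real.norm_of_nonneg ht0.le]
    rw [norm_sub_rev y x] at this
    have : ‖x - y‖ ≤ 0 := by
      by_contra hc
      push Not at hc
      nlinarith
    exact sub_eq_zero.1 (norm_le_zero_iff.1 this)
  have hsurj : Function.Surjective (fun x => x + t • h x) := by
    intro y
    let T : (ι → ℝ) → (ι → ℝ) := fun x => y - t • h x
    have hT : ContractingWith (⟨t, ht0.le⟩ * K) T := by
      constructor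
      · rw [← NNReal.coe_lt_coe]
        change t * K < 1
        nlinarith
      · apply LipschitzWith.of_dist_le_mul
        intro a b
        have := hK.dist_le_mul a b
        simp only [T, dist_sub_left]
        rw [dist_smul₀, Real.norm_of_nonneg ht0.le]
        change _ ≤ t * K * _
        rw [mul_assoc]
        gcongr
    refine ⟨hT.fixedPoint T, ?_⟩
    have := hT.fixedPoint_isFixedPt
    change y - t • h (hT.fixedPoint T) = hT.fixedPoint T at this
    change hT.fixedPoint T + t • h (hT.fixedPoint T) = y
    rw [← eq_sub_iff_add_eq]; exact this.symm
  have himg : (fun x => x + t • h x) '' Metric.closedBall (0 : ι → ℝ) R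
      = Metric.closedBall (0 : ι → ℝ) R := by
    ext y
    constructor
    · rintro ⟨x, hx, rfl⟩
      by_contra hc
      have h1 : h (x + t • h x) = 0 := hs _ hc
      have : x + t • h x = x := hinj (by simp only [h1, smul_zero, add_zero])
      apply hc
      change x + t • h x ∈ _
      rwa [this]
    · intro hy
      obtain ⟨x, rfl⟩ := hsurj y
      by_cases hx : x ∈ Metric.closedBall (0 : ι → ℝ) R
      · exact ⟨x, hx, rfl⟩
      · exfalso; apply hx
        simpa [hs x hx] using hy
  have key := integral_image_eq_integral_abs_det_fderiv_smul (μ := volume)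
    (s := Metric.closedBall (0 : ι → ℝ) R) (f := fun x => x + t • h x)
    (f' := fun x => ContinuousLinearMap.id ℝ (ι → ℝ) + t • fderiv ℝ h x)
    Metric.isClosed_closedBall.measurableSet
    (fun x _ => ((hasFDerivAt_id x).add
      (((hh.differentiable (by norm_num)) x).hasFDerivAt.const_smul t)).hasFDerivWithinAt)
    hinj.injOn φ
  rw [himg] at key
  rw [key]
  congr with x
  rw [abs_of_pos (hpos x), smul_eq_mul]

lemma brw_poly (A : (ι → ℝ) →L[ℝ] (ι → ℝ)) (x v : ι → ℝ) (C₀ : ℝ) (m : ℕ) :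
    ∃ P : ℝ[X], P.natDegree ≤ Fintype.card ι + m * 2 ∧ ∀ t : ℝ, P.eval t =
      (ContinuousLinearMap.id ℝ (ι → ℝ) + t • A).det * (C₀ - ∑ i, (x i + t * v i) ^ 2) ^ m := by
  classical
  let M := LinearMap.toMatrix' (A : (ι → ℝ) →ₗ[ℝ] (ι → ℝ))
  refine ⟨Matrix.det ((X : ℝ[X]) • M.map C + (1 : Matrix ι ι ℝ).map C) *
    (C C₀ - ∑ i, (C (x i) + X * C (v i)) ^ 2) ^ m, ?_, ?_⟩
  · refine natDegree_mul_le.trans (add_le_add (natDegree_det_X_add_C_le _ _) ?_)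
    refine natDegree_pow_le.trans (Nat.mul_le_mul_left _ ?_)
    refine (natDegree_sub_le _ _).trans (max_le (by simp) ?_)
    refine natDegree_sum_le_of_forall_le _ _ (fun i _ => ?_)
    refine natDegree_pow_le.trans ?_
    have : (C (x i) + X * C (v i) : ℝ[X]).natDegree ≤ 1 := by compute_degree
    omega
  · intro t
    rw [eval_mul, eval_pow, eval_sub, eval_finsetSum]
    congr 1
    · rw [← coe_evalRingHom, RingHom.map_det, ContinuousLinearMap.det, ← LinearMap.det_toMatrix']
      congr 1
      ext i j
      simp [M, Matrix.one_apply, LinearMap.toMatrix'_apply]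
      by_cases hij : i = j
      · subst hij; simp; ring
      · simp [hij]; ring
    · simp [mul_comm t]

lemma brw_one (h : (ι → ℝ) → (ι → ℝ)) (hh : ContDiff ℝ 1 h) (R : ℝ)
    (hs : ∀ x, x ∉ Metric.closedBall (0 : ι → ℝ) R → h x = 0) (C₀ : ℝ) (m : ℕ) :
      ∫ x in Metric.closedBall (0 : ι → ℝ) R,
        (ContinuousLinearMap.id ℝ (ι → ℝ) + fderiv ℝ h x).det *
          (C₀ - ∑ i, (x i + h x i) ^ 2) ^ m
      = ∫ x in Metric.closedBall (0 : ι → ℝ) R, (C₀ - ∑ i, (x i) ^ 2) ^ m := by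
  obtain ⟨η, hη, hsm⟩ := brw_small h hh R hs
  let N := Fintype.card ι + m * 2 + 1
  let s := Finset.range N
  let v : ℕ → ℝ := fun k => η / (k + 2)
  have hvpos : ∀ k, 0 < v k := fun k => by simp only [v]; positivity
  have hvlt : ∀ k, v k < η := fun k => by
    simp only [v]
    rw [div_lt_iff₀ (by positivity)]
    have : (0:ℝ) ≤ k := Nat.cast_nonneg k
    nlinarith
  have hvi : Set.InjOn v s := by
    intro a _ b _ hab
    simp only [v] at hab
    rw [div_eq_div_iff (by positivity) (by positivity)] at hab
    have := mul_left_cancel₀ hη.ne' hab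
    exact_mod_cast (by linarith : (a:ℝ) = b)
  let c : ℕ → ℝ := fun k => (Lagrange.basis s v k).eval 1
  have hc1 : ∑ k ∈ s, c k = 1 := by
    have := congrArg (eval (1:ℝ)) (Lagrange.sum_basis hvi (Finset.nonempty_range_iff.2 (by simp [N])))
    simpa [eval_finsetSum, c] using this
  have hpt : ∀ x, (ContinuousLinearMap.id ℝ (ι → ℝ) + fderiv ℝ h x).det *
          (C₀ - ∑ i, (x i + h x i) ^ 2) ^ m = ∑ k ∈ s, c k *
        ((ContinuousLinearMap.id ℝ (ι → ℝ) + v k • fderiv ℝ h x).det *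
          (C₀ - ∑ i, ((x + v k • h x) i) ^ 2) ^ m) := by
    intro x
    obtain ⟨P, hPd, hP⟩ := brw_poly (fderiv ℝ h x) x (h x) C₀ m
    have hdeg : P.degree < s.card := by
      refine degree_le_natDegree.trans_lt ?_
      simp only [s, Finset.card_range]
      exact_mod_cast Nat.lt_succ_of_le hPd
    have h1 := congrArg (eval (1:ℝ)) (Lagrange.eq_interpolate hvi hdeg)
    rw [hP, Lagrange.interpolate_apply, eval_finsetSum] at h1
    simp only [one_smul, one_mul] at h1
    rw [h1]
    refine Finset.sum_congr rfl fun k _ => ?_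
    rw [eval_mul, eval_C, hP]
    simp [c, mul_comm]
  simp_rw [hpt]
  rw [integral_finsetSum]
  · have : ∀ k ∈ s, ∫ x in Metric.closedBall (0 : ι → ℝ) R, c k *
        ((ContinuousLinearMap.id ℝ (ι → ℝ) + v k • fderiv ℝ h x).det *
          (C₀ - ∑ i, ((x + v k • h x) i) ^ 2) ^ m) =
        c k * ∫ x in Metric.closedBall (0 : ι → ℝ) R, (C₀ - ∑ i, (x i) ^ 2) ^ m := by
      intro k _
      rw [integral_const_mul, hsm (v k) (hvpos k) (hvlt k) (fun y => (C₀ - ∑ i, (y i) ^ 2) ^ m)]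
    rw [Finset.sum_congr rfl this, ← Finset.sum_mul, hc1, one_mul]
  · intro k _
    have c1 := hh.continuous_fderiv (by norm_num)
    have c2 := hh.continuous
    have c3 : Continuous fun x => (ContinuousLinearMap.id ℝ (ι → ℝ) + v k • fderiv ℝ h x).det :=
      ContinuousLinearMap.continuous_det.comp (by fun_prop)
    refine ContinuousOn.integrableOn_compact (isCompact_closedBall _ _) (Continuous.continuousOn ?_)
    refine continuous_const.mul (c3.mul ?_)
    fun_prop

lemma brw_zero (h : (ι → ℝ) → (ι → ℝ)) (hh : ContDiff ℝ 1 h) (R : ℝ) (hR : 0 < R)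
    (hs : ∀ x, x ∉ Metric.closedBall (0 : ι → ℝ) R → h x = 0) : ∃ x, x + h x = 0 := by
  by_contra hno
  push Not at hno
  set B := Metric.closedBall (0 : ι → ℝ) R with hB
  have hBc : IsCompact B := isCompact_closedBall _ _
  have hBn : B.Nonempty := ⟨0, by simp [hB, hR.le]⟩
  have c2 := hh.continuous
  let Q : (ι → ℝ) → ℝ := fun y => ∑ i, (y i) ^ 2
  have hQc : Continuous Q := by fun_prop
  have hQpos : ∀ y, y ≠ 0 → 0 < Q y := by
    intro y hy
    obtain ⟨i, hi⟩ := Function.ne_iff.1 hy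
    exact Finset.sum_pos' (fun i _ => sq_nonneg _) ⟨i, Finset.mem_univ _, by
      have : y i ≠ 0 := hi
      positivity⟩
  have hgc : Continuous fun x => Q (x + h x) := by fun_prop
  obtain ⟨x₀, _, hx₀⟩ := hBc.exists_isMinOn hBn hgc.continuousOn
  obtain ⟨x₁, _, hx₁⟩ := hBc.exists_isMaxOn hBn hgc.continuousOn
  obtain ⟨x₂, _, hx₂⟩ := hBc.exists_isMaxOn hBn hQc.continuousOn
  set δ := Q (x₀ + h x₀) with hδ
  have hδ0 : 0 < δ := hQpos _ (hno x₀)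
  have hx₀' : ∀ x ∈ B, δ ≤ Q (x + h x) := fun x hx => hx₀ hx
  have hx₁' : ∀ x ∈ B, Q (x + h x) ≤ Q (x₁ + h x₁) := fun x hx => hx₁ hx
  have hx₂' : ∀ x ∈ B, Q x ≤ Q x₂ := fun x hx => hx₂ hx
  have hQnn : ∀ y, 0 ≤ Q y := fun y => Finset.sum_nonneg fun i _ => sq_nonneg _
  set C₀ := δ + Q (x₁ + h x₁) + Q x₂ with hC₀
  have hdc : Continuous fun x => (ContinuousLinearMap.id ℝ (ι → ℝ) + fderiv ℝ h x).det :=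
      ContinuousLinearMap.continuous_det.comp
        (continuous_const.add (hh.continuous_fderiv (by norm_num)))
  obtain ⟨D, hD⟩ := hBc.exists_bound_of_continuousOn hdc.continuousOn
  let B' : Set (ι → ℝ) := B ∩ {y | Q y ≤ δ / 2}
  have hB'm : MeasurableSet B' :=
    hBc.measurableSet.inter (isClosed_le hQc continuous_const).measurableSet
  have hvB : volume B < ⊤ := hBc.measure_lt_top
  have hvB' : 0 < volume.real B' := by
    rw [measureReal_def, ENNReal.toReal_pos_iff]
    refine ⟨?_, (measure_mono inter_subset_left).trans_lt hvB⟩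
    refine Measure.measure_pos_of_mem_nhds volume (x := 0) ?_
    refine Filter.inter_mem (Metric.closedBall_mem_nhds 0 hR) ?_
    have : Q 0 < δ / 2 := by simp [Q]; positivity
    filter_upwards [hQc.continuousAt.eventually (gt_mem_nhds this)] with y hy using hy.le
  have key : ∀ m : ℕ, (C₀ - δ / 2) ^ m * volume.real B' ≤ D * (C₀ - δ) ^ m * volume.real B := by
    intro m
    have e := brw_one h hh R hs C₀ m
    have lower : (C₀ - δ / 2) ^ m * volume.real B' ≤ ∫ x in B, (C₀ - Q x) ^ m := by
      have hint : IntegrableOn (fun x => (C₀ - Q x) ^ m) B :=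
        ContinuousOn.integrableOn_compact hBc (Continuous.continuousOn (by fun_prop))
      calc (C₀ - δ / 2) ^ m * volume.real B' = ∫ x in B', (C₀ - δ / 2) ^ m := by
            simp [mul_comm]
        _ ≤ ∫ x in B', (C₀ - Q x) ^ m := by
            refine setIntegral_mono_on ?_ (hint.mono_set inter_subset_left) hB'm ?_
            · exact integrableOn_const ((measure_mono inter_subset_left).trans_lt hvB).ne
            · intro x hx
              have h2 : Q x ≤ δ / 2 := hx.2
              have := hQnn (x₁ + h x₁)
              have := hQnn x₂
              exact pow_le_pow_left₀ (by linarith) (by linarith) _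
        _ ≤ _ := by
            refine setIntegral_mono_set hint ?_ (Filter.Eventually.of_forall inter_subset_left)
            refine (ae_restrict_iff' hBc.measurableSet).2 (Filter.Eventually.of_forall ?_)
            intro x hx
            have := hx₂' x hx
            have := hQnn (x₁ + h x₁)
            exact pow_nonneg (by linarith) _
    refine lower.trans ?_
    change (∫ x in B, (C₀ - ∑ i, (x i) ^ 2) ^ m) ≤ _
    rw [← e]
    refine (le_abs_self _).trans ?_
    rw [← Real.norm_eq_abs]
    refine norm_setIntegral_le_of_norm_le_const hvB ?_
    intro x hx
    rw [norm_mul, norm_pow]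
    have a1 := hx₀' x hx
    have a2 := hx₁' x hx
    have a3 := hQnn x₂
    have : ‖C₀ - ∑ i, (x i + h x i) ^ 2‖ ≤ C₀ - δ := by
      change ‖C₀ - Q (x + h x)‖ ≤ _
      rw [Real.norm_of_nonneg (by linarith)]
      linarith
    exact mul_le_mul (hD x hx) (pow_le_pow_left₀ (norm_nonneg _) this _) (by positivity)
      ((norm_nonneg _).trans (hD x hx))
  have b1 := hQnn (x₁ + h x₁)
  have b2 := hQnn x₂
  have hpos : 0 < C₀ - δ / 2 := by linarith
  have hr : (C₀ - δ) / (C₀ - δ / 2) < 1 := by rw [div_lt_one hpos]; linarith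
  have hr0 : 0 ≤ (C₀ - δ) / (C₀ - δ / 2) := div_nonneg (by linarith) hpos.le
  have lim : Filter.Tendsto (fun m : ℕ => D * ((C₀ - δ) / (C₀ - δ / 2)) ^ m * volume.real B)
      Filter.atTop (nhds (D * 0 * volume.real B)) :=
    ((tendsto_pow_atTop_nhds_zero_of_lt_one hr0 hr).const_mul D).mul_const _
  have := ge_of_tendsto' lim (b := volume.real B') (fun m => by
    rw [div_pow]
    have := key m
    rw [mul_comm, ← le_div_iff₀ (pow_pos hpos m)] at this
    refine this.trans (le_of_eq ?_)
    field_simp)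
  simp at this
  linarith

/-- Brouwer's fixed point theorem on a cube. -/
lemma brouwer_cube (M : ℝ) (hM : 0 < M) (F : (ι → ℝ) → (ι → ℝ))
    (hF : ContinuousOn F (Icc 0 (fun _ => M))) (hmap : ∀ x ∈ Icc (0 : ι → ℝ) (fun _ => M),
      F x ∈ Icc (0 : ι → ℝ) (fun _ => M)) :
    ∃ x ∈ Icc (0 : ι → ℝ) (fun _ => M), F x = x := by
  have h0M : (0 : ι → ℝ) ≤ fun _ => M := fun _ => hM.le
  let π : (ι → ℝ) → (ι → ℝ) := fun x i => max 0 (min M (x i))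
  have hπc : Continuous π := by fun_prop
  have hπm : ∀ x, π x ∈ Icc (0 : ι → ℝ) (fun _ => M) := fun x =>
    ⟨fun i => le_max_left _ _, fun i => max_le hM.le (min_le_left _ _)⟩
  have hπid : ∀ x ∈ Icc (0 : ι → ℝ) (fun _ => M), π x = x := by
    intro x hx; ext i
    have := hx.1 i
    have := hx.2 i
    simp_all [π]
  let G : (ι → ℝ) → (ι → ℝ) := fun x => F (π x)
  have hGc : Continuous G := hF.comp_continuous hπc hπm
  have hGm : ∀ x, G x ∈ Icc (0 : ι → ℝ) (fun _ => M) := fun x => hmap _ (hπm x)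
  suffices h : ∃ x, x = G x by
    obtain ⟨x, hx⟩ := h
    have hxm : x ∈ Icc (0 : ι → ℝ) (fun _ => M) := hx ▸ hGm x
    refine ⟨x, hxm, ?_⟩
    have : G x = F x := by simp only [G, hπid x hxm]
    rw [← this, ← hx]
  by_contra hno
  push Not at hno
  have hGn : ∀ x, ‖G x‖ ≤ M := fun x => by
    rw [pi_norm_le_iff_of_nonneg hM.le]
    intro i
    rw [Real.norm_of_nonneg ((hGm x).1 i)]
    exact (hGm x).2 i
  let ψ : (ι → ℝ) → ℝ := fun x => max 0 (min 1 (M + 2 - ‖x‖))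
  have hψc : Continuous ψ := by fun_prop
  have hψ0 : ∀ x, M + 2 ≤ ‖x‖ → ψ x = 0 := fun x hx => by
    simp only [ψ]; rw [max_eq_left]; exact (min_le_right _ _).trans (by linarith)
  have hψ1 : ∀ x, ‖x‖ ≤ M + 1 → ψ x = 1 := fun x hx => by
    simp only [ψ]; rw [min_eq_left (by linarith)]; simp
  have hψr : ∀ x, 0 ≤ ψ x ∧ ψ x ≤ 1 := fun x =>
    ⟨le_max_left _ _, max_le zero_le_one (min_le_left _ _)⟩
  let k : (ι → ℝ) → (ι → ℝ) := fun x => - (ψ x • G x)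
  have hkc : Continuous k := (hψc.smul hGc).neg
  have hkM : ∀ x, ‖k x‖ ≤ M := fun x => by
    simp only [k, norm_neg, norm_smul]
    rw [Real.norm_of_nonneg (hψr x).1]
    nlinarith [hGn x, norm_nonneg (G x), hψr x]
  set B := Metric.closedBall (0 : ι → ℝ) (M + 1)
  have hBc : IsCompact B := isCompact_closedBall _ _
  have hBn : B.Nonempty := ⟨0, by simp [B]; linarith⟩
  obtain ⟨x₀, hx₀B, hx₀⟩ := hBc.exists_isMinOn hBn
    (f := fun x => ‖x - G x‖) (by fun_prop)
  have hx₀' : ∀ x ∈ B, ‖x₀ - G x₀‖ ≤ ‖x - G x‖ := fun x hx => hx₀ hx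
  have hpos : 0 < ‖x₀ - G x₀‖ := norm_pos_iff.2 (sub_ne_zero.2 (hno x₀))
  set δ := min 1 ‖x₀ - G x₀‖ with hδ
  have hδ0 : 0 < δ := lt_min one_pos hpos
  obtain ⟨h, hh, hhd, hhs⟩ := hkc.exists_contDiff_approx 1 (ε := fun _ => δ)
    continuous_const (fun _ => hδ0)
  obtain ⟨x, hx⟩ := brw_zero h (by simpa using hh) (M + 2) (by linarith) (fun x hx => by
    by_contra hc
    apply hhs hc
    have : M + 2 ≤ ‖x‖ := by
      simp at hx; exact hx.le
    simp [k, hψ0 x this])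
  have hd := hhd x
  rw [dist_eq_norm] at hd
  have hhx : h x = -x := by rw [add_comm] at hx; exact eq_neg_of_add_eq_zero_left hx
  have hxB : ‖x‖ ≤ M + 1 := by
    have h1 : ‖h x‖ ≤ ‖h x - k x‖ + ‖k x‖ := by
      simpa using norm_add_le (h x - k x) (k x)
    rw [hhx, norm_neg, ← hhx] at h1
    have := hkM x
    have : δ ≤ 1 := min_le_left _ _
    linarith
  have h2 := hx₀' x (by simpa [B] using hxB)
  have h3 : h x - k x = -(x - G x) := by
    simp only [k, hhx, hψ1 x hxB, one_smul]; abel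
  rw [h3, norm_neg] at hd
  have : δ ≤ ‖x₀ - G x₀‖ := min_le_right _ _
  linarith

end Brouwer

lemma continuum_of_brouwer {ι : Type*} [Fintype ι] (M : ℝ) (hM : 0 < M)
    (F : ℝ × (ι → ℝ) → (ι → ℝ))
    (hF : ContinuousOn F (Icc (0 : ℝ) M ×ˢ Icc (0 : ι → ℝ) (fun _ => M)))
    (hmap : ∀ p ∈ Icc (0 : ℝ) M ×ˢ Icc (0 : ι → ℝ) (fun _ => M),
      F p ∈ Icc (0 : ι → ℝ) (fun _ => M))
    (hF0 : ∀ u ∈ Icc (0 : ι → ℝ) (fun _ => M), F (0, u) = 0) :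
    ∃ u : ι → ℝ, (M, u) ∈ connectedComponentIn
      {p : ℝ × (ι → ℝ) | p ∈ Icc (0 : ℝ) M ×ˢ Icc (0 : ι → ℝ) (fun _ => M) ∧ F p = p.2}
      (0, 0) := by
  set K := Icc (0 : ℝ) M ×ˢ Icc (0 : ι → ℝ) (fun _ => M) with hK
  set Z := {p : ℝ × (ι → ℝ) | p ∈ K ∧ F p = p.2} with hZ
  have hKc : IsCompact K := isCompact_Icc.prod isCompact_Icc
  have hZc : IsCompact Z := by
    have h1 : ContinuousOn (fun p => F p - p.2) K := hF.sub continuousOn_snd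
    have h2 : IsClosed (K ∩ (fun p => F p - p.2) ⁻¹' {0}) :=
      h1.preimage_isClosed_of_isClosed hKc.isClosed isClosed_singleton
    have h3 : Z = K ∩ (fun p => F p - p.2) ⁻¹' {0} := by
      ext p; simp [hZ, sub_eq_zero]
    rw [h3]
    exact hKc.of_isClosed_subset h2 inter_subset_left
  have h0c : (0 : ι → ℝ) ∈ Icc (0 : ι → ℝ) (fun _ => M) := ⟨le_rfl, fun _ => hM.le⟩
  have h0K : ((0 : ℝ), (0 : ι → ℝ)) ∈ K := ⟨⟨le_rfl, hM.le⟩, h0c⟩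
  have h0Z : ((0 : ℝ), (0 : ι → ℝ)) ∈ Z := ⟨h0K, hF0 0 h0c⟩
  have : CompactSpace Z := isCompact_iff_compactSpace.1 hZc
  by_contra hno
  push Not at hno
  rw [connectedComponentIn_eq_image h0Z] at hno
  let T : Set Z := {z | z.1.1 = M}
  have hTc : IsClosed T := isClosed_eq (by fun_prop) continuous_const
  obtain ⟨s, hs⟩ := hTc.isCompact.elim_finite_subfamily_closed
    (fun s : { s : Set Z // IsClopen s ∧ (⟨(0, 0), h0Z⟩ : Z) ∈ s } => (s : Set Z))
    (fun s => s.2.1.isClosed) (by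
      rw [← connectedComponent_eq_iInter_isClopen]
      ext z
      simp only [mem_inter_iff, mem_empty_iff_false, iff_false, not_and]
      intro hz hz'
      refine hno z.1.2 ⟨z, hz', ?_⟩
      have : z.1.1 = M := hz
      rw [← this])
  set C : Set Z := ⋂ i ∈ s, (i : Set Z) with hC
  have hCc : IsClopen C := isClopen_biInter_finset fun i _ => i.2.1
  have hC0 : (⟨(0, 0), h0Z⟩ : Z) ∈ C := by
    simp only [hC, mem_iInter]; exact fun i _ => i.2.2
  have hAc : IsClosed (Subtype.val '' C : Set (ℝ × (ι → ℝ))) :=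
    (hCc.isClosed.isCompact.image continuous_subtype_val).isClosed
  have hBc : IsClosed (Subtype.val '' Cᶜ : Set (ℝ × (ι → ℝ))) :=
    (hCc.compl.isClosed.isCompact.image continuous_subtype_val).isClosed
  have hdis : Disjoint (Subtype.val '' Cᶜ : Set (ℝ × (ι → ℝ))) (Subtype.val '' C) :=
    disjoint_image_of_injective Subtype.val_injective disjoint_compl_left
  obtain ⟨τ, hτ0, hτ1, hτr⟩ := exists_continuous_zero_one_of_isClosed hBc hAc hdis
  let pr : (Option ι → ℝ) → ℝ × (ι → ℝ) := fun x => (x none, fun i => x (some i))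
  have hprc : Continuous pr := by fun_prop
  have hprK : ∀ x ∈ Icc (0 : Option ι → ℝ) (fun _ => M), pr x ∈ K := fun x hx =>
    ⟨⟨hx.1 none, hx.2 none⟩, fun i => hx.1 (some i), fun i => hx.2 (some i)⟩
  let G : (Option ι → ℝ) → (Option ι → ℝ) := fun x o => o.elim (M * τ (pr x)) (F (pr x))
  obtain ⟨x, hx, hGx⟩ := brouwer_cube M hM G (by
    rw [continuousOn_pi]
    rintro (_ | i)
    · exact (continuous_const.mul (τ.continuous.comp hprc)).continuousOn
    · have h1 : ContinuousOn (fun x => F (pr x)) (Icc (0 : Option ι → ℝ) (fun _ => M)) :=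
        hF.comp hprc.continuousOn hprK
      exact (continuous_apply i).comp_continuousOn h1) (by
    intro x hx
    have h1 := hmap _ (hprK x hx)
    have h2 := hτr (pr x)
    constructor
    · rintro (_ | i)
      · exact mul_nonneg hM.le h2.1
      · exact h1.1 i
    · rintro (_ | i)
      · exact mul_le_of_le_one_right hM.le h2.2
      · exact h1.2 i)
  have e1 : M * τ (pr x) = x none := congrFun hGx none
  have e2 : F (pr x) = (pr x).2 := funext fun i => congrFun hGx (some i)
  have hxZ : pr x ∈ Z := ⟨hprK x hx, e2⟩
  by_cases hxC : (⟨pr x, hxZ⟩ : Z) ∈ C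
  · have h1 : τ (pr x) = 1 := hτ1 ⟨_, hxC, rfl⟩
    rw [h1, mul_one] at e1
    have : (⟨pr x, hxZ⟩ : Z) ∈ T ∩ C := ⟨e1.symm, hxC⟩
    rw [hs] at this
    exact this
  · have h1 : τ (pr x) = 0 := hτ0 ⟨_, hxC, rfl⟩
    rw [h1, mul_zero] at e1
    apply hxC
    have h2 : pr x = (0, 0) := by
      have h3 : pr x = (0, (pr x).2) := by rw [Prod.ext_iff]; exact ⟨e1.symm, rfl⟩
      rw [Prod.ext_iff]
      refine ⟨e1.symm, ?_⟩
      rw [← e2, h3]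
      exact hF0 _ (hprK x hx).2
    have : (⟨pr x, hxZ⟩ : Z) = ⟨(0, 0), h0Z⟩ := Subtype.ext h2
    rw [this]; exact hC0

lemma neg_lapG_eq {V : Type*} (w : V → V → ℝ) (hnn : ∀ x y, 0 ≤ w x y)
    (hlocfin : ∀ x, {y | 0 < w x y}.Finite) (u : V → ℝ) (x : V) :
    -(lapG w u x) = (∑ y ∈ (hlocfin x).toFinset, w x y * (u x - u y)) / degG w x := by
  unfold lapG
  rw [tsum_eq_sum (s := (hlocfin x).toFinset), ← neg_div, ← Finset.sum_neg_distrib]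
  · congr 1
    refine Finset.sum_congr rfl fun y _ => ?_
    ring
  · intro y hy
    have : w x y = 0 := by
      simp at hy; exact le_antisymm hy (hnn x y)
    simp [this]

lemma degG_eq {V : Type*} (w : V → V → ℝ) (hnn : ∀ x y, 0 ≤ w x y)
    (hlocfin : ∀ x, {y | 0 < w x y}.Finite) (x : V) :
    degG w x = ∑ y ∈ (hlocfin x).toFinset, w x y := by
  unfold degG
  refine tsum_eq_sum fun y hy => ?_
  simp at hy; exact le_antisymm hy (hnn x y)

lemma neg_lapG_eq' {V : Type*} (w : V → V → ℝ) (hnn : ∀ x y, 0 ≤ w x y)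
    (hlocfin : ∀ x, {y | 0 < w x y}.Finite) (hdeg : ∀ x, 0 < degG w x) (u : V → ℝ) (x : V) :
    -(lapG w u x) = u x - (∑ y ∈ (hlocfin x).toFinset, w x y * u y) / degG w x := by
  rw [neg_lapG_eq w hnn hlocfin]
  have h := degG_eq w hnn hlocfin x
  have hd := (hdeg x).ne'
  rw [div_eq_iff hd, sub_mul, div_mul_cancel₀ _ hd]
  conv_rhs => rw [h, Finset.mul_sum]
  rw [← Finset.sum_sub_distrib]
  refine Finset.sum_congr rfl fun y _ => ?_
  ring

lemma maxprinG {V : Type*}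
    (w : V → V → ℝ) (hsym : ∀ x y, w x y = w y x) (hnn : ∀ x y, 0 ≤ w x y)
    (hlocfin : ∀ x, {y | 0 < w x y}.Finite) (hdeg : ∀ x, 0 < degG w x)
    (Ω : Set V) (hΩfin : Ω.Finite) (hΩne : Ω.Nonempty)
    (hbdry : (bdryG w Ω).Nonempty) (hconn : connG w Ω) (u : V → ℝ)
    (hu0 : ∀ x ∉ Ω, u x = 0) (hu : ∀ x ∈ Ω, 0 ≤ -(lapG w u x)) : ∀ x, 0 ≤ u x := by
  obtain ⟨a, haΩ, ha⟩ := exists_min_image Ω u hΩfin hΩne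
  by_contra hno
  push Not at hno
  obtain ⟨b, hb⟩ := hno
  have hbΩ : b ∈ Ω := by
    by_contra h; rw [hu0 b h] at hb; exact lt_irrefl _ hb
  have ha0 : u a < 0 := (ha b hbΩ).trans_lt hb
  have hmin : ∀ y, u a ≤ u y := fun y => by
    by_cases hy : y ∈ Ω
    · exact ha y hy
    · rw [hu0 y hy]; exact ha0.le
  have hnb : ∀ x ∈ Ω, u x = u a → ∀ y, 0 < w x y → u y = u a := by
    intro x hx hxa y hy
    have h1 := hu x hx
    rw [neg_lapG_eq w hnn hlocfin, le_div_iff₀ (hdeg x), zero_mul] at h1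
    have h2 : ∀ y ∈ (hlocfin x).toFinset, w x y * (u x - u y) ≤ 0 := fun y _ =>
      mul_nonpos_of_nonneg_of_nonpos (hnn x y) (by rw [hxa]; linarith [hmin y])
    have h3 := (Finset.sum_eq_zero_iff_of_nonpos h2).1 (le_antisymm (Finset.sum_nonpos h2) h1) y
      (by simpa using hy)
    have h4 : u x - u y = 0 := by
      rcases mul_eq_zero.1 h3 with h | h
      · exact absurd h hy.ne'
      · exact h
    linarith
  have hall : ∀ x ∈ Ω, u x = u a := by
    by_contra hne
    push Not at hne
    obtain ⟨c, hcΩ, hc⟩ := hne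
    obtain ⟨x, hx, y, hy, hxy⟩ := hconn {x | x ∈ Ω ∧ u x = u a} {x | x ∈ Ω ∧ u x ≠ u a}
      ⟨a, haΩ, rfl⟩ ⟨c, hcΩ, hc⟩ (fun x hx => hx.1) (fun x hx => hx.1) (by
        ext x; simp only [mem_union, mem_ofPred_eq]; tauto)
    exact hy.2 (hnb x hx.1 hx.2 y hxy)
  obtain ⟨z, hzΩ, y, hyΩ, hzy⟩ := hbdry
  have := hnb y hyΩ (hall y hyΩ) z (by rwa [hsym])
  rw [hu0 z hzΩ] at this
  linarith

lemma solG_bound (f : ℝ → ℝ) (hC1 : ContDiffOn ℝ 1 f (Set.Ici 0))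
    (hconv : StrictConvexOn ℝ (Set.Ici 0) f)
    (s₀ : ℝ) (hs₀pos : 0 < s₀)
    (hs₀eq : f s₀ = s₀ * derivWithin f (Set.Ici 0) s₀) (s : ℝ) (hs : 0 ≤ s) :
    s * f s₀ ≤ s₀ * f s := by
  have hd : DifferentiableWithinAt ℝ f (Ici 0) s₀ :=
    hC1.differentiableOn (by norm_num) s₀ hs₀pos.le
  rcases lt_trichotomy s s₀ with h | h | h
  · have := hconv.convexOn.slope_le_of_hasDerivWithinAt hs hs₀pos.le h hd.hasDerivWithinAt
    rw [slope_def_field, div_le_iff₀ (by linarith)] at this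
    nlinarith
  · rw [h]
  · have := hconv.convexOn.le_slope_of_hasDerivWithinAt hs₀pos.le hs h hd.hasDerivWithinAt
    rw [slope_def_field, le_div_iff₀ (by linarith)] at this
    nlinarith

/-- **Continuum of solutions with arbitrarily large norm on finite graphs**: for a weighted
graph, `Ω` finite and `m^G`-connected with nonempty boundary, and `f ∈ C¹([0,∞))` strictly
convex, increasing, `f(0) > 0` and superlinear, for every `0 < ε < λ*` there exists
`0 < λ < ε` and a solution `u^λ` of `(P(λ f))` with `‖u^λ‖_∞ = g₂⁻¹(ε)`; moreover `(λ, u^λ)`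
lies in the connected component of `(0, 0)` in the solution set
`S* = {(λ, u) ∈ [0, λ*] × (V → ℝ) : u solves (P(λ f))}`. -/
theorem graph_continuum_branch {V : Type*}
    (w : V → V → ℝ) (hsym : ∀ x y, w x y = w y x) (hnn : ∀ x y, 0 ≤ w x y)
    (hlocfin : ∀ x, {y | 0 < w x y}.Finite) (hdeg : ∀ x, 0 < degG w x)
    (Ω : Set V) (hΩfin : Ω.Finite) (hΩne : Ω.Nonempty)
    (hbdry : (bdryG w Ω).Nonempty) (hconn : connG w Ω)
    (f : ℝ → ℝ) (hC1 : ContDiffOn ℝ 1 f (Set.Ici 0))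
    (hconv : StrictConvexOn ℝ (Set.Ici 0) f)
    (hmono : MonotoneOn f (Set.Ici 0)) (hf0 : 0 < f 0)
    (hsup : Filter.Tendsto (fun s => f s / s) Filter.atTop Filter.atTop)
    (s₀ : ℝ) (hs₀pos : 0 < s₀)
    (hs₀eq : f s₀ = s₀ * derivWithin f (Set.Ici 0) s₀)
    (g2inv : ℝ → ℝ)
    (hg2 : ∀ t : ℝ, 0 < t → t ≤ s₀ / f s₀ →
      s₀ ≤ g2inv t ∧ g2inv t / f (g2inv t) = t) :
    ∀ ε : ℝ, 0 < ε → ε < lamStarG w Ω f →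
      ∃ lam : ℝ, ∃ usol : V → ℝ, 0 < lam ∧ lam < ε ∧ IsSolG w Ω lam f usol ∧
        (⨆ x ∈ closG w Ω, |usol x|) = g2inv ε ∧
        (lam, usol) ∈ connectedComponentIn
          {p : ℝ × (V → ℝ) | p.1 ∈ Set.Icc 0 (lamStarG w Ω f) ∧ IsSolG w Ω p.1 f p.2}
          (0, fun _ => 0) := by
  classical
  intro ε hε hεl
  have : Fintype Ω := hΩfin.fintype
  have : Nonempty Ω := hΩne.to_subtype
  have hfpos : ∀ s, 0 ≤ s → 0 < f s := fun s hs =>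
    hf0.trans_le (hmono (mem_Ici.2 le_rfl) hs hs)
  have hcont : ContinuousOn f (Ici 0) := hC1.continuousOn
  -- every admissible parameter is at most `s₀ / f s₀`
  have hbound : ∀ lam u, IsSolG w Ω lam f u → lam ≤ s₀ / f s₀ := by
    intro lam u hu
    obtain ⟨x, hx⟩ := hΩne
    have h1 := hu.2.2 x hx
    rw [neg_lapG_eq' w hnn hlocfin hdeg] at h1
    have h2 : 0 ≤ (∑ y ∈ (hlocfin x).toFinset, w x y * u y) / degG w x :=
      div_nonneg (Finset.sum_nonneg fun y _ => mul_nonneg (hnn x y) (hu.2.1 y)) (hdeg x).le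
    have h3 := solG_bound f hC1 hconv s₀ hs₀pos hs₀eq (u x) (hu.2.1 x)
    have h4 := hfpos (u x) (hu.2.1 x)
    have h5 := hfpos s₀ hs₀pos.le
    rw [le_div_iff₀ h5]
    have h6 : lam * f (u x) ≤ u x := by linarith
    have h7 : (lam * f s₀) * f (u x) ≤ s₀ * f (u x) := by nlinarith
    exact le_of_mul_le_mul_right h7 h4
  have hbdd : BddAbove {lam : ℝ | 0 ≤ lam ∧ ∃ u : V → ℝ, IsSolG w Ω lam f u} :=
    ⟨s₀ / f s₀, fun lam ⟨_, u, hu⟩ => hbound lam u hu⟩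
  have hle : ∀ lam u, 0 ≤ lam → IsSolG w Ω lam f u → lam ≤ lamStarG w Ω f :=
    fun lam u h0 hu => le_csSup hbdd ⟨h0, u, hu⟩
  have hε2 : ε ≤ s₀ / f s₀ := by
    have hne : {lam : ℝ | 0 ≤ lam ∧ ∃ u : V → ℝ, IsSolG w Ω lam f u}.Nonempty := by
      by_contra hne
      rw [not_nonempty_iff_eq_empty] at hne
      rw [lamStarG, hne, Real.sSup_empty] at hεl
      linarith
    obtain ⟨lam, ⟨_, u, hu⟩, hlt⟩ := exists_lt_of_lt_csSup hne hεl
    exact hlt.le.trans (hbound lam u hu)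
  obtain ⟨hMs, hMe⟩ := hg2 ε hε hε2
  set M := g2inv ε with hMdef
  have hM : 0 < M := hs₀pos.trans_le hMs
  have hMf : M = ε * f M := by
    rw [div_eq_iff (hfpos M hM.le).ne'] at hMe; exact hMe
  let ext : (Ω → ℝ) → (V → ℝ) := fun u x => if h : x ∈ Ω then u ⟨x, h⟩ else 0
  have ext_in : ∀ u (x : Ω), ext u x = u x := fun u x => by simp [ext]
  have ext_out : ∀ u x, x ∉ Ω → ext u x = 0 := fun u x hx => by simp [ext, hx]
  have ext_add : ∀ u v x, ext (u + v) x = ext u x + ext v x := fun u v x => by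
    by_cases hx : x ∈ Ω <;> simp [ext, hx]
  have ext_smul : ∀ (c : ℝ) u x, ext (c • u) x = c * ext u x := fun c u x => by
    by_cases hx : x ∈ Ω <;> simp [ext, hx]
  have ext_cont : Continuous ext := by
    refine continuous_pi fun x => ?_
    by_cases hx : x ∈ Ω
    · simp only [ext, hx, dite_true]; fun_prop
    · simp only [ext, hx, dite_false]; fun_prop
  let L : (Ω → ℝ) →ₗ[ℝ] (Ω → ℝ) :=
    { toFun := fun u x => ext u x - (∑ y ∈ (hlocfin x).toFinset, w x y * ext u y) / degG w x
      map_add' := fun u v => by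
        ext x
        simp only [ext_add, Pi.add_apply, mul_add, Finset.sum_add_distrib]
        ring
      map_smul' := fun c u => by
        ext x
        simp only [ext_smul, Pi.smul_apply, smul_eq_mul, RingHom.id_apply, mul_sub, mul_left_comm,
          ← Finset.mul_sum, mul_div_assoc] }
  have hL : ∀ u (x : Ω), L u x = -(lapG w (ext u) x) := fun u x =>
    (neg_lapG_eq' w hnn hlocfin hdeg (ext u) x).symm
  have hLeq : ∀ u (x : Ω), L u x =
      u x - (∑ y ∈ (hlocfin x).toFinset, w x y * ext u y) / degG w x := fun u x => by
    rw [← ext_in u x]; rfl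
  have hLpos : ∀ u, (∀ x, 0 ≤ L u x) → ∀ x, 0 ≤ ext u x := fun u hu =>
    maxprinG w hsym hnn hlocfin hdeg Ω hΩfin hΩne hbdry hconn (ext u) (ext_out u)
      (fun x hx => by rw [← hL u ⟨x, hx⟩]; exact hu _)
  have hLinj : Function.Injective L := by
    rw [injective_iff_map_eq_zero]
    intro u hu
    ext x
    have h1 := hLpos u (fun x => by simp [hu]) x
    have h2 := hLpos (-u) (fun x => by simp [hu]) x
    rw [ext_in] at h1 h2
    simp at h2
    exact le_antisymm h2 h1
  let K : (Ω → ℝ) →ₗ[ℝ] (Ω → ℝ) := (LinearEquiv.ofInjectiveEndo L hLinj).symm.toLinearMap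
  have hLK : ∀ h, L (K h) = h := fun h => (LinearEquiv.ofInjectiveEndo L hLinj).apply_symm_apply h
  have hKc : Continuous K := LinearMap.continuous_of_finiteDimensional K
  have hKpos : ∀ h : Ω → ℝ, (∀ x, 0 ≤ h x) → ∀ x, 0 ≤ ext (K h) x := fun h hh =>
    hLpos (K h) (by rw [hLK]; exact hh)
  have hKge : ∀ h : Ω → ℝ, (∀ x, 0 ≤ h x) → ∀ x, h x ≤ K h x := by
    intro h hh x
    have h1 := hLeq (K h) x
    rw [hLK] at h1
    have h2 : 0 ≤ (∑ y ∈ (hlocfin x).toFinset, w x y * ext (K h) y) / degG w x :=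
      div_nonneg (Finset.sum_nonneg fun y _ => mul_nonneg (hnn _ y) (hKpos h hh y)) (hdeg x).le
    linarith
  let H : (Ω → ℝ) → (Ω → ℝ) := fun u => K (fun x => f (u x))
  have hHc : ContinuousOn H (Icc 0 (fun _ => M)) := by
    refine hKc.comp_continuousOn (continuousOn_pi.2 fun x => ?_)
    exact hcont.comp (continuous_apply x).continuousOn (fun u hu => hu.1 x)
  have hHge : ∀ u ∈ Icc (0 : Ω → ℝ) (fun _ => M), ∀ x, 0 < H u x := fun u hu x =>
    (hfpos _ (hu.1 x)).trans_le (hKge _ (fun y => (hfpos _ (hu.1 y)).le) x)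
  have hHn : ∀ u ∈ Icc (0 : Ω → ℝ) (fun _ => M), 0 < ‖H u‖ := fun u hu => by
    obtain ⟨x⟩ := ‹Nonempty Ω›
    exact (norm_pos_iff.2 (hHge u hu x).ne').trans_le (norm_le_pi_norm (H u) x)
  let Λ : ℝ × (Ω → ℝ) → ℝ := fun p => p.1 / ‖H p.2‖
  have hΛc : ContinuousOn Λ (Icc (0 : ℝ) M ×ˢ Icc (0 : Ω → ℝ) (fun _ => M)) := by
    refine continuousOn_fst.div ?_ (fun p hp => (hHn p.2 hp.2).ne')
    exact (hHc.comp continuousOn_snd (fun p hp => hp.2)).norm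
  let F : ℝ × (Ω → ℝ) → (Ω → ℝ) := fun p => Λ p • H p.2
  have hFn : ∀ p ∈ Icc (0 : ℝ) M ×ˢ Icc (0 : Ω → ℝ) (fun _ => M), ‖F p‖ = p.1 := by
    intro p hp
    simp only [F, Λ, norm_smul, norm_div, norm_norm]
    rw [div_mul_cancel₀ _ (hHn p.2 hp.2).ne', Real.norm_of_nonneg hp.1.1]
  obtain ⟨u, hu⟩ := continuum_of_brouwer M hM F
    (hΛc.smul (hHc.comp continuousOn_snd (fun p hp => hp.2))) (by
      intro p hp
      constructor
      · intro x
        exact mul_nonneg (div_nonneg hp.1.1 (norm_nonneg _)) (hHge p.2 hp.2 x).le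
      · intro x
        refine (le_abs_self _).trans ?_
        rw [← Real.norm_eq_abs]
        exact (norm_le_pi_norm (F p) x).trans ((hFn p hp).le.trans hp.1.2)) (by
      intro u _
      simp [F, Λ])
  set Z := {p : ℝ × (Ω → ℝ) |
    p ∈ Icc (0 : ℝ) M ×ˢ Icc (0 : Ω → ℝ) (fun _ => M) ∧ F p = p.2} with hZ
  have hsol : ∀ p ∈ Z, 0 ≤ Λ p ∧ IsSolG w Ω (Λ p) f (ext p.2) := by
    intro p hp
    refine ⟨div_nonneg hp.1.1.1 (norm_nonneg _), ext_out _, ?_, ?_⟩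
    · intro x
      by_cases hx : x ∈ Ω
      · rw [ext_in p.2 ⟨x, hx⟩]; exact hp.1.2.1 _
      · rw [ext_out _ _ hx]
    · intro x hx
      rw [← hL p.2 ⟨x, hx⟩, ext_in p.2 ⟨x, hx⟩]
      conv_lhs => rw [← hp.2]
      simp only [F, H]
      rw [map_smul, hLK]
      simp
  let Φ : ℝ × (Ω → ℝ) → ℝ × (V → ℝ) := fun p => (Λ p, ext p.2)
  have hΦc : ContinuousOn Φ Z :=
    (hΛc.mono fun p hp => hp.1).prodMk (ext_cont.comp continuous_snd).continuousOn
  have hCZ := connectedComponentIn_subset Z ((0 : ℝ), (0 : Ω → ℝ))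
  have huZ := hCZ hu
  have h00 : ((0 : ℝ), (0 : Ω → ℝ)) ∈ connectedComponentIn Z ((0 : ℝ), (0 : Ω → ℝ)) :=
    mem_connectedComponentIn (connectedComponentIn_nonempty_iff.1 ⟨_, hu⟩)
  have hun : ‖u‖ = M := by
    have h1 := hFn _ huZ.1
    rwa [huZ.2] at h1
  have hsolu := hsol _ huZ
  have hun0 : ∀ x, 0 ≤ u x := fun x => huZ.1.2.1 x
  have hlpos : 0 < Λ (M, u) := div_pos hM (hHn u huZ.1.2)
  have hupos : ∀ x, 0 < u x := fun x => by
    have h1 : F (M, u) x = u x := congrFun huZ.2 x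
    rw [← h1]
    exact mul_pos hlpos (hHge u huZ.1.2 x)
  obtain ⟨x₀, hx₀⟩ : ∃ x, u x = M := by
    obtain ⟨x, hx⟩ := Finite.exists_max u
    refine ⟨x, le_antisymm (huZ.1.2.2 x) ?_⟩
    rw [← hun, pi_norm_le_iff_of_nonneg (hun0 x)]
    intro y
    rw [Real.norm_of_nonneg (hun0 y)]
    exact hx y
  refine ⟨Λ (M, u), ext u, hlpos, ?_, hsolu.2, ?_, ?_⟩
  · have h1 := hsolu.2.2.2 x₀ x₀.2
    rw [neg_lapG_eq' w hnn hlocfin hdeg] at h1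
    change ext u x₀ - (∑ y ∈ (hlocfin x₀).toFinset, w x₀ y * ext u y) / degG w x₀
      = Λ (M, u) * f (ext u x₀) at h1
    rw [ext_in, hx₀] at h1
    obtain ⟨y, hy, z, hz, hyz⟩ := hconn Ω {(x₀ : V)} hΩne (singleton_nonempty _) subset_rfl
      (singleton_subset_iff.2 x₀.2) (union_eq_left.2 (singleton_subset_iff.2 x₀.2))
    rw [mem_singleton_iff] at hz
    subst hz
    rw [hsym] at hyz
    have h2 : 0 < (∑ y ∈ (hlocfin x₀).toFinset, w x₀ y * ext u y) / degG w x₀ := by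
      refine div_pos (Finset.sum_pos' (fun y _ => mul_nonneg (hnn _ y) (hsolu.2.2.1 y))
        ⟨y, by simpa using hyz, mul_pos hyz ?_⟩) (hdeg _)
      rw [ext_in u ⟨y, hy⟩]; exact hupos _
    have h3 : Λ (M, u) * f M < ε * f M := by linarith
    exact lt_of_mul_lt_mul_right h3 (hfpos M hM.le).le
  · have hin : ∀ x, (⨆ _ : x ∈ closG w Ω, |ext u x|) ≤ M := by
      intro x
      refine Real.iSup_le (fun _ => ?_) hM.le
      by_cases hx : x ∈ Ω
      · rw [ext_in u ⟨x, hx⟩, abs_of_nonneg (hun0 _)]; exact huZ.1.2.2 _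
      · rw [ext_out _ _ hx, abs_zero]; exact hM.le
    refine le_antisymm (Real.iSup_le hin hM.le) ?_
    have h1 : (⨆ _ : (x₀ : V) ∈ closG w Ω, |ext u x₀|) = M := by
      have : (x₀ : V) ∈ closG w Ω := Or.inl x₀.2
      rw [ciSup_pos this, ext_in, hx₀, abs_of_pos hM]
    rw [← h1]
    exact le_ciSup (f := fun x : V => ⨆ _ : x ∈ closG w Ω, |ext u x|)
      ⟨M, by rintro _ ⟨x, rfl⟩; exact hin x⟩ (x₀ : V)
  · have hpre : IsPreconnected (Φ '' connectedComponentIn Z ((0 : ℝ), (0 : Ω → ℝ))) :=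
      isPreconnected_connectedComponentIn.image Φ (hΦc.mono hCZ)
    have hΦ0 : Φ ((0 : ℝ), (0 : Ω → ℝ)) = (0, fun _ => 0) := by
      refine Prod.ext (by simp [Φ, Λ]) ?_
      funext x
      by_cases hx : x ∈ Ω <;> simp [Φ, ext]
    refine hpre.subset_connectedComponentIn ⟨_, h00, hΦ0⟩ ?_ ⟨_, hu, rfl⟩
    rintro _ ⟨p, hp, rfl⟩
    have := hsol p (hCZ hp)
    exact ⟨⟨this.1, hle _ _ this.1 this.2⟩, this.2⟩
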